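/- Let 1 ≤ p < ∞ and for each n ∈ ℕ let X^{(n)} be a random vector in B_p^n with directional distribution C_{n,p}, and set R_n = (∏_{i=1}^n |X_i^{(n)}|)^{1/n} / ((1/n) ∑_{i=1}^n |X_i^{(n)}|^p)^{1/p}. Then for every θ ∈ (0, e^{m_p}), lim_{n→∞} (1/n) log P(R_n < θ) = −I_p(θ). -/

import Mathlib

open MeasureTheory ProbabilityTheory Filter Set

noncomputable section

/-- The `ℓ_p`-norm on `ℝ^n`: `‖x‖_p = (∑ |x_i|^p)^{1/p}`. -/
def pNorm (p : ℝ) {n : ℕ} (x : Fin n → ℝ) : ℝ := (∑ i, |x i| ^ p) ^ (1 / p)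

/-- The unit ball `B_p^n = {x : ‖x‖_p ≤ 1}`. -/
def unitBallp (n : ℕ) (p : ℝ) : Set (Fin n → ℝ) := {x | pNorm p x ≤ 1}

/-- The unit sphere `S_p^{n-1} = {x : ‖x‖_p = 1}`. -/
def unitSpherep (n : ℕ) (p : ℝ) : Set (Fin n → ℝ) := {x | pNorm p x = 1}

/-- The cone spanned by a set: `{r x : r ∈ [0,1], x ∈ A}`. -/
def coneOf {n : ℕ} (A : Set (Fin n → ℝ)) : Set (Fin n → ℝ) :=
  {y | ∃ r ∈ Icc (0:ℝ) 1, ∃ x ∈ A, y = r • x}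

/-- `C` is the cone probability measure `C_{n,p}` on `S_p^{n-1}`: the probability measure
concentrated on the sphere with `C(A) = vol_n({r x : r ∈ [0,1], x ∈ A})/vol_n(B_p^n)` for
measurable `A ⊆ S_p^{n-1}`. -/
def IsConeMeasure (n : ℕ) (p : ℝ) (C : Measure (Fin n → ℝ)) : Prop :=
  IsProbabilityMeasure C ∧ C (unitSpherep n p)ᶜ = 0 ∧
    ∀ A : Set (Fin n → ℝ), MeasurableSet A → A ⊆ unitSpherep n p →
      C A = volume (coneOf A) / volume (unitBallp n p)

/-- A random vector `X` (on the probability space `(Ω, P)`) has directional distribution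
`C_{n,p}`: it equals in distribution `R • Z`, where `Z ∼ C_{n,p}` and `R` is an independent
random variable with values in `[0,1]` whose law has no atom at `0`.  Independence of `R`
and `Z` is encoded by taking the joint law to be the product measure `μ_R ⊗ C_{n,p}`. -/
def HasConeDirDist (n : ℕ) (p : ℝ) {Ω : Type*} [MeasurableSpace Ω] (P : Measure Ω)
    (X : Ω → Fin n → ℝ) : Prop :=
  ∃ (μR : Measure ℝ) (C : Measure (Fin n → ℝ)),
    IsProbabilityMeasure μR ∧ μR (Icc (0:ℝ) 1)ᶜ = 0 ∧ μR {0} = 0 ∧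
    IsConeMeasure n p C ∧
    Measure.map X P = Measure.map (fun rz : ℝ × (Fin n → ℝ) => rz.1 • rz.2) (μR.prod C)

/-- The digamma function `ψ = Γ'/Γ`. -/
def digammaFn (x : ℝ) : ℝ := deriv Real.Gamma x / Real.Gamma x

/-- `H(x) = ψ(x) - log x`. -/
def Hfun (x : ℝ) : ℝ := digammaFn x - Real.log x

/-- The inverse `H⁻¹` of the increasing bijection `H : (0,∞) → (-∞,0)`. -/
def Hinv (y : ℝ) : ℝ := Function.invFunOn Hfun (Ioi 0) y

/-- The constant `m_p = (1/p)(ψ(1/p) + log p)`. -/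
def mConst (p : ℝ) : ℝ := (1/p) * (digammaFn (1/p) + Real.log p)

/-- `G_p(θ) = H⁻¹(p log θ)`. -/
def Gfun (p θ : ℝ) : ℝ := Hinv (p * Real.log θ)

/-- The rate function
`I_p(θ) = [p G_p(θ) - 1] log θ + G_p(θ)[log G_p(θ) - 1] - log Γ(G_p(θ))
            + (1/p)(1 + log p) + log Γ(1/p)`. -/
def ratefn (p θ : ℝ) : ℝ :=
  (p * Gfun p θ - 1) * Real.log θ + Gfun p θ * (Real.log (Gfun p θ) - 1)
    - Real.log (Real.Gamma (Gfun p θ)) + (1/p) * (1 + Real.log p)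
    + Real.log (Real.Gamma (1/p))

/-- The ratio of the two sides of the `p`-generalized AGM inequality:
`R_n = (∏ |x_i|)^{1/n} / ((1/n) ∑ |x_i|^p)^{1/p}`. -/
def ratioAGM (p : ℝ) {n : ℕ} (x : Fin n → ℝ) : ℝ :=
  (∏ i, |x i|) ^ ((1:ℝ)/n) / ((1/(n:ℝ)) * ∑ i, |x i| ^ p) ^ (1/p)

theorem hasDerivAt_log_Gamma {x : ℝ} (hx : 0 < x) :
    HasDerivAt (fun y => Real.log (Real.Gamma y)) (digammaFn x) x := by
  have hd : DifferentiableAt ℝ Real.Gamma x :=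
    Real.differentiableAt_Gamma fun m => by
      have : (0 : ℝ) ≤ m := m.cast_nonneg
      linarith
  exact hd.hasDerivAt.log (Real.Gamma_pos_of_pos hx).ne'

theorem log_Gamma_add_one {x : ℝ} (hx : 0 < x) :
    Real.log (Real.Gamma (x + 1)) = Real.log (Real.Gamma x) + Real.log x := by
  rw [Real.Gamma_add_one hx.ne', Real.log_mul hx.ne' (Real.Gamma_pos_of_pos hx).ne', add_comm]

theorem digammaFn_add_one {x : ℝ} (hx : 0 < x) : digammaFn (x + 1) = digammaFn x + 1 / x := by
  have h1 : HasDerivAt (fun y => Real.log (Real.Gamma (y + 1))) (digammaFn (x + 1)) x :=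
    (hasDerivAt_log_Gamma (by linarith : 0 < x + 1)).comp_add_const x 1
  have h2 : HasDerivAt (fun y => Real.log (Real.Gamma y) + Real.log y)
      (digammaFn x + x⁻¹) x := (hasDerivAt_log_Gamma hx).add (Real.hasDerivAt_log hx.ne')
  rw [one_div]
  refine h1.unique (h2.congr_of_eventuallyEq ?_)
  filter_upwards [lt_mem_nhds hx] with y hy using log_Gamma_add_one hy

theorem digammaFn_le_log {x : ℝ} (hx : 0 < x) : digammaFn x ≤ Real.log x := by
  have h := Real.convexOn_log_Gamma.le_slope_of_hasDerivAt (x := x) (y := x + 1) hx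
    (show 0 < x + 1 by linarith) (by linarith) (hasDerivAt_log_Gamma hx)
  rw [slope_def_field] at h
  simpa [log_Gamma_add_one hx] using h

theorem log_le_digammaFn_add_one {x : ℝ} (hx : 0 < x) : Real.log x ≤ digammaFn (x + 1) := by
  have h := Real.convexOn_log_Gamma.slope_le_of_hasDerivAt (x := x) (y := x + 1) hx
    (show 0 < x + 1 by linarith) (by linarith) (hasDerivAt_log_Gamma (by linarith))
  rw [slope_def_field] at h
  simpa [log_Gamma_add_one hx] using h

theorem Hfun_nonpos {x : ℝ} (hx : 0 < x) : Hfun x ≤ 0 := by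
  have := digammaFn_le_log hx
  unfold Hfun
  linarith

theorem neg_one_div_le_Hfun {x : ℝ} (hx : 0 < x) : -(1 / x) ≤ Hfun x := by
  have := log_le_digammaFn_add_one hx
  rw [digammaFn_add_one hx] at this
  unfold Hfun
  linarith

/-- The increment `H(x + 1) - H(x)`. -/
def Hstep (x : ℝ) : ℝ := 1 / x - Real.log (1 + 1 / x)

theorem Hfun_add_one {x : ℝ} (hx : 0 < x) : Hfun (x + 1) = Hfun x + Hstep x := by
  have h : 1 + 1 / x = (x + 1) / x := by field_simp
  rw [Hfun, Hfun, Hstep, digammaFn_add_one hx, h, Real.log_div (by linarith) hx.ne']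
  ring

theorem Hstep_lt_Hstep {x y : ℝ} (hx : 0 < x) (hxy : x < y) : Hstep y < Hstep x := by
  have hy : 0 < y := hx.trans hxy
  set u := 1 / x with hu
  set v := 1 / y with hv
  have hv0 : 0 < v := by positivity
  have huv : v < u := one_div_lt_one_div_of_lt hx hxy
  have h : Real.log ((1 + u) / (1 + v)) ≤ (1 + u) / (1 + v) - 1 :=
    Real.log_le_sub_one_of_pos (by positivity)
  rw [Real.log_div (by linarith) (by linarith)] at h
  have h2 : (1 + u) / (1 + v) - 1 < u - v := by
    rw [div_sub_one (by linarith), div_lt_iff₀ (by linarith)]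
    nlinarith
  change v - Real.log (1 + v) < u - Real.log (1 + u)
  linarith

theorem Hfun_add_natCast {x : ℝ} (hx : 0 < x) (N : ℕ) :
    Hfun (x + N) = Hfun x + ∑ k ∈ Finset.range N, Hstep (x + k) := by
  induction N with
  | zero => simp
  | succ N ih =>
    have h : (0 : ℝ) < x + N := by positivity
    rw [Finset.sum_range_succ, ← add_assoc, ← ih, ← Hfun_add_one h]
    push_cast
    ring_nf

theorem Hfun_strictMonoOn : StrictMonoOn Hfun (Ioi 0) := by
  intro x hx y hy hxy
  rw [mem_Ioi] at hx hy
  have key : ∀ N : ℕ, Hfun x - Hfun y ≤ 1 / (y + (N + 1 : ℕ)) - (Hstep x - Hstep y) := by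
    intro N
    have hN : (0 : ℝ) < y + (N + 1 : ℕ) := by positivity
    have h1 := Hfun_nonpos (x := x + (N + 1 : ℕ)) (by positivity)
    have h2 := neg_one_div_le_Hfun hN
    rw [Hfun_add_natCast hx, Finset.sum_range_succ'] at h1
    rw [Hfun_add_natCast hy, Finset.sum_range_succ'] at h2
    have h3 : ∑ k ∈ Finset.range N, Hstep (y + (k + 1 : ℕ)) ≤
        ∑ k ∈ Finset.range N, Hstep (x + (k + 1 : ℕ)) :=
      Finset.sum_le_sum fun k _ => (Hstep_lt_Hstep (by positivity) (by linarith)).le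
    simp only [Nat.cast_zero, add_zero] at h1 h2
    linarith
  have hlim : Tendsto (fun N : ℕ => 1 / (y + (N + 1 : ℕ)) - (Hstep x - Hstep y)) atTop
      (nhds (0 - (Hstep x - Hstep y))) := by
    refine Tendsto.sub_const ?_ _
    refine tendsto_const_nhds.div_atTop (tendsto_atTop_add_const_left _ _ ?_)
    exact tendsto_natCast_atTop_atTop.comp (tendsto_add_atTop_nat 1)
  have := ge_of_tendsto' hlim key
  have := Hstep_lt_Hstep hx hxy
  linarith

theorem exists_Hfun_lt (y : ℝ) : ∃ x, 0 < x ∧ Hfun x < y := by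
  set u : ℝ := 2 * (|y| + Real.log 2 + 1) with hu
  have hl : 0 < Real.log 2 := Real.log_pos (by norm_num)
  have hu0 : 0 < u := by positivity
  refine ⟨1 / u, by positivity, ?_⟩
  have h1 := Hfun_nonpos (x := 1 / u + 1) (by positivity)
  rw [Hfun_add_one (by positivity), Hstep, one_div_one_div] at h1
  have h2 : Real.log ((1 + u) / 2) ≤ (1 + u) / 2 - 1 := Real.log_le_sub_one_of_pos (by positivity)
  rw [Real.log_div (by linarith) (by norm_num)] at h2
  have := neg_abs_le y
  linarith

/-- The convex potential `log Γ(x) - x log x + x`, a primitive of `H`. -/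
def Hprim (x : ℝ) : ℝ := Real.log (Real.Gamma x) - x * Real.log x + x

theorem hasDerivAt_Hprim {x : ℝ} (hx : 0 < x) : HasDerivAt Hprim (Hfun x) x := by
  have h := ((hasDerivAt_log_Gamma hx).sub
    ((hasDerivAt_id x).mul (Real.hasDerivAt_log hx.ne'))).add (hasDerivAt_id x)
  refine h.congr_deriv ?_
  simp only [Hfun, id_eq]
  field_simp
  ring

theorem exists_Hfun_eq {b y : ℝ} (hb : 0 < b) (hy : y < Hfun b) : ∃ x ∈ Ioo 0 b, Hfun x = y := by
  obtain ⟨x, hx, hxy⟩ := exists_Hfun_lt y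
  have himage : OrdConnected (Hfun '' Ioi 0) :=
    ordConnected_Ioi.image_hasDerivWithinAt (f := Hprim)
      fun x hx => (hasDerivAt_Hprim hx).hasDerivWithinAt
  obtain ⟨z, hz, rfl⟩ := himage.out ⟨x, hx, rfl⟩ ⟨b, hb, rfl⟩ ⟨hxy.le, hy.le⟩
  exact ⟨z, ⟨hz, (Hfun_strictMonoOn.lt_iff_lt hz hb).1 hy⟩, rfl⟩

theorem Hinv_mem_and_eq {b y : ℝ} (hb : 0 < b) (hy : y < Hfun b) :
    Hinv y ∈ Ioo 0 b ∧ Hfun (Hinv y) = y := by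
  obtain ⟨x, hx, hxy⟩ := exists_Hfun_eq hb hy
  have hex : ∃ x ∈ Ioi (0 : ℝ), Hfun x = y := ⟨x, hx.1, hxy⟩
  have h1 : Hinv y ∈ Ioi (0 : ℝ) := Function.invFunOn_mem hex
  have h2 : Hfun (Hinv y) = y := Function.invFunOn_eq hex
  exact ⟨⟨h1, (Hfun_strictMonoOn.lt_iff_lt h1 hb).1 (h2.trans_lt hy)⟩, h2⟩

theorem Hprim_sub_le {x y : ℝ} (hx : 0 < x) (hxy : x < y) :
    Hprim y - Hprim x ≤ Hfun y * (y - x) := by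
  obtain ⟨c, hc, hcs⟩ := exists_hasDerivAt_eq_slope Hprim Hfun hxy
    (fun z hz => (hasDerivAt_Hprim (hx.trans_le hz.1)).continuousAt.continuousWithinAt)
    (fun z hz => hasDerivAt_Hprim (hx.trans hz.1))
  have hle : Hfun c ≤ Hfun y :=
    (Hfun_strictMonoOn (hx.trans hc.1) (hx.trans hxy) hc.2).le
  rwa [hcs, div_le_iff₀ (by linarith)] at hle

theorem integrable_comp_abs_of_integrableOn_Ioi {f : ℝ → ℝ} (hf : IntegrableOn f (Ioi 0)) :
    Integrable fun x => f |x| := by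
  have h1 : IntegrableOn (fun x => f |x|) (Ioi 0) :=
    hf.congr_fun (fun x hx => by rw [abs_of_pos hx]) measurableSet_Ioi
  have h2 : IntegrableOn (fun x => f |x|) (Iic 0) := by
    rw [integrableOn_Iic_iff_integrableOn_Iio]
    have := h1.comp_neg
    simpa using this
  rw [← integrableOn_univ, ← Iic_union_Ioi (a := (0 : ℝ))]
  exact h2.union h1

theorem integrable_abs_rpow_mul_exp {p q b : ℝ} (hp : 0 < p) (hq : -1 < q) (hb : 0 < b) :
    Integrable fun y : ℝ => |y| ^ q * Real.exp (-b * |y| ^ p) :=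
  integrable_comp_abs_of_integrableOn_Ioi (f := fun y => y ^ q * Real.exp (-b * y ^ p))
    (integrableOn_rpow_mul_exp_neg_mul_rpow hq hp hb)

theorem integral_abs_rpow_mul_exp {p q b : ℝ} (hp : 0 < p) (hq : -1 < q) (hb : 0 < b) :
    ∫ y : ℝ, |y| ^ q * Real.exp (-b * |y| ^ p) =
      2 * (b ^ (-(q + 1) / p) * (1 / p) * Real.Gamma ((q + 1) / p)) := by
  rw [integral_comp_abs (f := fun y => y ^ q * Real.exp (-b * y ^ p)),
    integral_rpow_mul_exp_neg_mul_rpow hp hq hb]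

/-- The mass of `|y| ^ (p a - 1) exp (- p a |y| ^ p)`. -/
def tiltMass (p a : ℝ) : ℝ := 2 / p * Real.Gamma a * (p * a) ^ (-a)

/-- The probability density proportional to `|y| ^ (p a - 1) exp (- p a |y| ^ p)`. -/
def tiltDensity (p a y : ℝ) : ℝ :=
  |y| ^ (p * a - 1) * Real.exp (-(p * a) * |y| ^ p) / tiltMass p a

/-- The probability law on `ℝ` with density `tiltDensity p a`. -/
def tiltMeasure (p a : ℝ) : Measure ℝ :=
  volume.withDensity fun y => ENNReal.ofReal (tiltDensity p a y)

section Tilt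

variable {p a : ℝ}

theorem tiltMass_pos (hp : 0 < p) (ha : 0 < a) : 0 < tiltMass p a := by
  have := Real.Gamma_pos_of_pos ha
  unfold tiltMass
  positivity

theorem tiltDensity_nonneg (hp : 0 < p) (ha : 0 < a) (y : ℝ) : 0 ≤ tiltDensity p a y := by
  have := tiltMass_pos hp ha
  unfold tiltDensity
  positivity

theorem measurable_tiltDensity : Measurable (tiltDensity p a) := by
  unfold tiltDensity
  fun_prop

theorem integrable_tiltDensity (hp : 0 < p) (ha : 0 < a) : Integrable (tiltDensity p a) :=
  (integrable_abs_rpow_mul_exp hp (by nlinarith [mul_pos hp ha]) (mul_pos hp ha)).div_const _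

theorem abs_rpow_mul_tiltDensity {y : ℝ} (hy : y ≠ 0) (t : ℝ) :
    tiltDensity p a y * |y| ^ t =
      |y| ^ (p * a - 1 + t) * Real.exp (-(p * a) * |y| ^ p) / tiltMass p a := by
  rw [tiltDensity, Real.rpow_add (abs_pos.2 hy)]
  ring

theorem ae_ne_zero_volume : ∀ᵐ y : ℝ, y ≠ 0 := by
  simp [ae_iff]

theorem ae_ne_zero_tiltMeasure : ∀ᵐ y ∂tiltMeasure p a, y ≠ 0 :=
  (withDensity_absolutelyContinuous _ _).ae_le ae_ne_zero_volume

theorem integrable_abs_rpow_tiltMeasure (hp : 0 < p) (ha : 0 < a) {t : ℝ} (ht : -(p * a) < t) :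
    Integrable (fun y => |y| ^ t) (tiltMeasure p a) := by
  rw [tiltMeasure, integrable_withDensity_iff_integrable_smul'
    measurable_tiltDensity.ennreal_ofReal (by simp)]
  refine ((integrable_abs_rpow_mul_exp hp (q := p * a - 1 + t) (by linarith)
    (mul_pos hp ha)).div_const (tiltMass p a)).congr ?_
  filter_upwards [ae_ne_zero_volume] with y hy
  rw [ENNReal.toReal_ofReal (tiltDensity_nonneg hp ha y), smul_eq_mul, abs_rpow_mul_tiltDensity hy]

theorem integral_abs_rpow_tiltMeasure (hp : 0 < p) (ha : 0 < a) {t : ℝ} (ht : -(p * a) < t) :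
    ∫ y, |y| ^ t ∂tiltMeasure p a = (p * a) ^ (-t / p) * Real.Gamma (a + t / p) / Real.Gamma a := by
  have hpa := mul_pos hp ha
  have hG := Real.Gamma_pos_of_pos ha
  rw [tiltMeasure, integral_withDensity_eq_integral_toReal_smul
    measurable_tiltDensity.ennreal_ofReal (by simp)]
  have : ∫ y, (ENNReal.ofReal (tiltDensity p a y)).toReal • |y| ^ t =
      ∫ y, |y| ^ (p * a - 1 + t) * Real.exp (-(p * a) * |y| ^ p) / tiltMass p a := by
    refine integral_congr_ae ?_
    filter_upwards [ae_ne_zero_volume] with y hy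
    rw [ENNReal.toReal_ofReal (tiltDensity_nonneg hp ha y), smul_eq_mul,
      abs_rpow_mul_tiltDensity hy]
  rw [this, integral_div, integral_abs_rpow_mul_exp hp (by linarith) hpa, tiltMass]
  have e1 : (p * a - 1 + t + 1) / p = a + t / p := by field_simp; ring
  have e2 : -(p * a - 1 + t + 1) / p = -a + -t / p := by field_simp; ring
  have := (Real.rpow_pos_of_pos hpa (-a)).ne'
  rw [e1, e2, Real.rpow_add hpa]
  field_simp

theorem isProbabilityMeasure_tiltMeasure (hp : 0 < p) (ha : 0 < a) :
    IsProbabilityMeasure (tiltMeasure p a) := by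
  have h0 : -(p * a) < 0 := by linarith [mul_pos hp ha]
  have h := integral_abs_rpow_tiltMeasure hp ha h0
  have hG := (Real.Gamma_pos_of_pos ha).ne'
  simp [hG, measureReal_def] at h
  exact ⟨by rwa [← ENNReal.toReal_eq_one_iff]⟩

theorem integral_abs_rpow_self_tiltMeasure (hp : 0 < p) (ha : 0 < a) :
    ∫ y, |y| ^ p ∂tiltMeasure p a = 1 / p := by
  have hpa := mul_pos hp ha
  have hG := (Real.Gamma_pos_of_pos ha).ne'
  rw [integral_abs_rpow_tiltMeasure hp ha (by linarith), div_self hp.ne', neg_div, div_self hp.ne',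
    Real.Gamma_add_one ha.ne', Real.rpow_neg_one]
  field_simp

theorem exp_mul_log_abs_ae_eq (t : ℝ) :
    (fun y => Real.exp (t * Real.log |y|)) =ᵐ[tiltMeasure p a] fun y => |y| ^ t := by
  filter_upwards [ae_ne_zero_tiltMeasure] with y hy
  rw [Real.rpow_def_of_pos (abs_pos.2 hy), mul_comm]

theorem zero_mem_interior_integrableExpSet (hp : 0 < p) (ha : 0 < a) :
    0 ∈ interior (integrableExpSet (fun y => Real.log |y|) (tiltMeasure p a)) := by
  rw [mem_interior]
  refine ⟨Ioi (-(p * a)), fun t ht => ?_, isOpen_Ioi, ?_⟩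
  · exact (integrable_congr (exp_mul_log_abs_ae_eq t)).2 (integrable_abs_rpow_tiltMeasure hp ha ht)
  · simp only [mem_Ioi]
    linarith [mul_pos hp ha]

theorem integrable_log_abs_tiltMeasure (hp : 0 < p) (ha : 0 < a) :
    Integrable (fun y => Real.log |y|) (tiltMeasure p a) :=
  integrable_of_mem_interior_integrableExpSet (zero_mem_interior_integrableExpSet hp ha)

theorem integral_log_abs_tiltMeasure (hp : 0 < p) (ha : 0 < a) :
    ∫ y, Real.log |y| ∂tiltMeasure p a = (Hfun a - Real.log p) / p := by
  have hpa := mul_pos hp ha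
  have hG := (Real.Gamma_pos_of_pos ha).ne'
  rw [← deriv_mgf_zero (zero_mem_interior_integrableExpSet hp ha)]
  have hev : mgf (fun y => Real.log |y|) (tiltMeasure p a) =ᶠ[nhds 0]
      fun t => (p * a) ^ (-t / p) * Real.Gamma (a + t / p) / Real.Gamma a := by
    filter_upwards [lt_mem_nhds (show -(p * a) < 0 by linarith)] with t ht
    rw [mgf, integral_congr_ae (exp_mul_log_abs_ae_eq t), integral_abs_rpow_tiltMeasure hp ha ht]
  rw [hev.deriv_eq]
  have hd : DifferentiableAt ℝ Real.Gamma (a + 0 / p) :=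
    Real.differentiableAt_Gamma fun m => by
      have : (0 : ℝ) ≤ m := m.cast_nonneg
      rw [zero_div]
      linarith
  have h1 : HasDerivAt (fun t : ℝ => a + t / p) (1 / p) 0 :=
    ((hasDerivAt_id (0 : ℝ)).div_const p).const_add a
  have h2 : HasDerivAt (fun t : ℝ => -t / p) (-1 / p) 0 :=
    (hasDerivAt_id (0 : ℝ)).neg.div_const p
  have h := ((h2.const_rpow hpa).mul (hd.hasDerivAt.comp 0 h1)).div_const (Real.Gamma a)
  refine h.deriv.trans ?_
  simp only [Hfun, digammaFn, Real.log_mul hp.ne' ha.ne', Function.comp]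
  simp
  field_simp
  ring

end Tilt

theorem integrable_pi_prod {n : ℕ} {f : ℝ → ℝ} (hf : Integrable f) :
    Integrable fun x : Fin n → ℝ => ∏ i, f (x i) :=
  Integrable.fintype_prod (f := fun _ => f) fun _ => hf

theorem pi_withDensity_ofReal (n : ℕ) {f : ℝ → ℝ} (hf0 : ∀ y, 0 ≤ f y)
    (hf : Integrable f) [SigmaFinite (volume.withDensity fun y => ENNReal.ofReal (f y))] :
    Measure.pi (fun _ : Fin n => volume.withDensity fun y => ENNReal.ofReal (f y)) =
      volume.withDensity fun x : Fin n → ℝ => ENNReal.ofReal (∏ i, f (x i)) := by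
  refine Measure.pi_eq fun s hs => ?_
  rw [withDensity_apply _ (MeasurableSet.univ_pi hs),
    ← ofReal_integral_eq_lintegral_ofReal (integrable_pi_prod hf).integrableOn
      (ae_of_all _ fun x => Finset.prod_nonneg fun i _ => hf0 _),
    ← integral_indicator (MeasurableSet.univ_pi hs)]
  have : ∀ x : Fin n → ℝ, (Set.univ.pi s).indicator (fun x => ∏ i, f (x i)) x =
      ∏ i, (s i).indicator f (x i) := by
    intro x
    by_cases hx : x ∈ Set.univ.pi s
    · rw [indicator_of_mem hx]
      exact Finset.prod_congr rfl fun i _ => (indicator_of_mem (hx i trivial) f).symm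
    · rw [indicator_of_notMem hx]
      obtain ⟨i, hi⟩ : ∃ i, x i ∉ s i := by simpa [Set.mem_pi] using hx
      exact (Finset.prod_eq_zero (Finset.mem_univ i) (indicator_of_notMem hi f)).symm
  simp_rw [this]
  rw [integral_fintype_prod_volume_eq_prod (fun i => (s i).indicator f),
    ENNReal.ofReal_prod_of_nonneg
      fun i _ => integral_nonneg fun y => indicator_nonneg (fun y _ => hf0 y) y]
  refine Finset.prod_congr rfl fun i _ => ?_
  rw [integral_indicator (hs i), withDensity_apply _ (hs i),
    ofReal_integral_eq_lintegral_ofReal hf.integrableOn (ae_of_all _ hf0)]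

theorem tendsto_pi_measure_deviation {Q : Measure ℝ} [IsProbabilityMeasure Q] {f : ℝ → ℝ}
    (hfm : Measurable f) (hf : Integrable f Q) {δ : ℝ} (hδ : 0 < δ) :
    Tendsto (fun n : ℕ => Measure.pi (fun _ : Fin n => Q)
      {x | δ ≤ |(∑ i, f (x i)) / n - ∫ y, f y ∂Q|}) atTop (nhds 0) := by
  set M := Measure.infinitePi fun _ : ℕ => Q
  have hmp : ∀ i, MeasurePreserving (fun ω : ℕ → ℝ => ω i) M Q :=
    measurePreserving_eval_infinitePi fun _ : ℕ => Q
  have hind : iIndepFun (fun (i : ℕ) (ω : ℕ → ℝ) => f (ω i)) M :=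
    iIndepFun_infinitePi (X := fun _ => f) fun _ => hfm
  have hint : ∫ ω, f (ω 0) ∂M = ∫ y, f y ∂Q := by
    rw [← (hmp 0).map_eq, integral_map (hmp 0).measurable.aemeasurable hfm.aestronglyMeasurable]
  have hslln := strong_law_ae_real (μ := M) (fun i ω => f (ω i))
    ((hmp 0).integrable_comp_of_integrable hf) (fun i j hij => hind.indepFun hij)
    (fun i => ⟨(hfm.comp (hmp i).measurable).aemeasurable,
      (hfm.comp (hmp 0).measurable).aemeasurable, by
      change Measure.map (f ∘ fun ω => ω i) M = Measure.map (f ∘ fun ω => ω 0) M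
      rw [← Measure.map_map hfm (by fun_prop), ← Measure.map_map hfm (by fun_prop),
        (hmp i).map_eq, (hmp 0).map_eq]⟩)
  have hmeas := tendstoInMeasure_of_tendsto_ae
    (fun n => (by fun_prop : Measurable fun ω : ℕ → ℝ =>
      (∑ i ∈ Finset.range n, f (ω i)) / n).aestronglyMeasurable) hslln
  rw [tendstoInMeasure_iff_dist] at hmeas
  refine (hmeas δ hδ).congr fun n => ?_
  have hmap : Measure.map (fun (ω : ℕ → ℝ) (i : Fin n) => ω i) M =
      Measure.pi (fun _ : Fin n => Q) := by
    have h := (iIndepFun_iff_map_fun_eq_pi_map fun i : Fin n => (hmp i).measurable.aemeasurable).1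
      ((iIndepFun_infinitePi (P := fun _ : ℕ => Q) (X := fun _ => id)
        fun _ => measurable_id).precomp (g := fun i : Fin n => (i : ℕ)) Fin.val_injective)
    refine h.trans ?_
    congr 1 with i : 1
    exact (hmp i).map_eq
  rw [← hmap, Measure.map_apply (by fun_prop) (measurableSet_le (by fun_prop) (by fun_prop))]
  congr 1 with ω
  simp [Real.dist_eq, hint, Finset.sum_range]

/-- The sum of the `p`-th powers of the absolute values of the coordinates. -/
def powSum (p : ℝ) {n : ℕ} (x : Fin n → ℝ) : ℝ := ∑ i, |x i| ^ p

section Cone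

open scoped Pointwise

variable {p : ℝ} {n : ℕ}

theorem powSum_nonneg (x : Fin n → ℝ) : 0 ≤ powSum p x :=
  Finset.sum_nonneg fun _ _ => by positivity

theorem measurable_powSum : Measurable fun x : Fin n → ℝ => powSum p x := by
  unfold powSum
  fun_prop

theorem powSum_smul {c : ℝ} (hc : 0 ≤ c) (x : Fin n → ℝ) :
    powSum p (c • x) = c ^ p * powSum p x := by
  simp only [powSum, Pi.smul_apply, smul_eq_mul, abs_mul, abs_of_nonneg hc, Finset.mul_sum]
  exact Finset.sum_congr rfl fun i _ => Real.mul_rpow hc (abs_nonneg _)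

theorem powSum_pos {x : Fin n → ℝ} (hx : x ≠ 0) : 0 < powSum p x := by
  obtain ⟨i, hi⟩ := Function.ne_iff.1 hx
  exact Finset.sum_pos' (fun _ _ => by positivity)
    ⟨i, Finset.mem_univ i, Real.rpow_pos_of_pos (abs_pos.2 hi) p⟩

theorem unitBallp_eq (hp : 0 < p) : unitBallp n p = {x | powSum p x ≤ 1} := by
  ext x
  change (powSum p x) ^ (1 / p) ≤ 1 ↔ powSum p x ≤ 1
  rw [one_div, Real.rpow_inv_le_iff_of_pos (powSum_nonneg x) zero_le_one hp, Real.one_rpow]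

theorem unitSpherep_eq (hp : 0 < p) : unitSpherep n p = {x | powSum p x = 1} := by
  ext x
  change (powSum p x) ^ (1 / p) = 1 ↔ powSum p x = 1
  rw [one_div, Real.rpow_inv_eq (powSum_nonneg x) zero_le_one hp.ne', Real.one_rpow]

theorem lintegral_Ici_exp_neg (s : ℝ) :
    ∫⁻ t in Ici s, ENNReal.ofReal (Real.exp (-t)) = ENNReal.ofReal (Real.exp (-s)) := by
  rw [setLIntegral_congr Ioi_ae_eq_Ici.symm, ← ofReal_integral_eq_lintegral_ofReal
    (integrableOn_exp_neg_Ioi s) (ae_of_all _ fun t => (Real.exp_pos _).le), integral_exp_neg_Ioi]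

theorem volume_inter_powSum_le (hp : 0 < p) {K : Set (Fin n → ℝ)}
    (hcone : ∀ c : ℝ, 0 < c → ∀ x, c • x ∈ K ↔ x ∈ K) {t : ℝ} (ht : 0 < t) :
    volume (K ∩ {x | powSum p x ≤ t}) =
      ENNReal.ofReal ((t ^ (1 / p)) ^ n) * volume (K ∩ {x | powSum p x ≤ 1}) := by
  set c := t ^ (1 / p) with hc
  have hc0 : 0 < c := Real.rpow_pos_of_pos ht _
  have hcp : c ^ p = t := by
    rw [hc, ← Real.rpow_mul ht.le, one_div_mul_cancel hp.ne', Real.rpow_one]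
  have hset : K ∩ {x | powSum p x ≤ t} = c • (K ∩ {x | powSum p x ≤ 1}) := by
    ext x
    rw [mem_smul_set_iff_inv_smul_mem₀ hc0.ne', mem_inter_iff, mem_inter_iff,
      hcone c⁻¹ (inv_pos.2 hc0), mem_ofPred_eq, mem_ofPred_eq, powSum_smul (inv_pos.2 hc0).le,
      Real.inv_rpow hc0.le, hcp, inv_mul_le_iff₀ ht, mul_one]
  rw [hset, Measure.addHaar_smul, Module.finrank_fin_fun, abs_of_pos (pow_pos hc0 n)]

theorem lintegral_exp_neg_powSum (hp : 0 < p) {K : Set (Fin n → ℝ)}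
    (hcone : ∀ c : ℝ, 0 < c → ∀ x, c • x ∈ K ↔ x ∈ K) :
    ∫⁻ x in K, ENNReal.ofReal (Real.exp (-powSum p x)) =
      (∫⁻ t in Ioi (0 : ℝ), ENNReal.ofReal (Real.exp (-t)) * ENNReal.ofReal ((t ^ (1 / p)) ^ n)) *
        volume (K ∩ unitBallp n p) := by
  have hN := measurable_powSum (p := p) (n := n)
  have hE : Measurable fun t : ℝ => ENNReal.ofReal (Real.exp (-t)) := by fun_prop
  have hlev : ∀ t, MeasurableSet {x : Fin n → ℝ | powSum p x ≤ t} :=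
    fun t => measurableSet_le hN measurable_const
  calc ∫⁻ x in K, ENNReal.ofReal (Real.exp (-powSum p x))
      = ∫⁻ x in K, ∫⁻ t : ℝ, {z : (Fin n → ℝ) × ℝ | powSum p z.1 ≤ z.2}.indicator
          (fun z => ENNReal.ofReal (Real.exp (-z.2))) (x, t) := by
        refine lintegral_congr fun x => ?_
        rw [← lintegral_Ici_exp_neg, ← lintegral_indicator measurableSet_Ici]
        rfl
    _ = ∫⁻ t : ℝ, ∫⁻ x in K, {z : (Fin n → ℝ) × ℝ | powSum p z.1 ≤ z.2}.indicator
          (fun z => ENNReal.ofReal (Real.exp (-z.2))) (x, t) := by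
        refine lintegral_lintegral_swap (Measurable.aemeasurable ?_)
        exact (hE.comp measurable_snd).indicator
          (measurableSet_le (hN.comp measurable_fst) measurable_snd)
    _ = ∫⁻ t : ℝ, ENNReal.ofReal (Real.exp (-t)) * volume (K ∩ {x | powSum p x ≤ t}) := by
        refine lintegral_congr fun t => ?_
        rw [inter_comm, ← Measure.restrict_apply (hlev t), ← lintegral_indicator_const (hlev t)]
        rfl
    _ = ∫⁻ t : ℝ, (Ioi (0 : ℝ)).indicator (fun t => ENNReal.ofReal (Real.exp (-t)) *
          ENNReal.ofReal ((t ^ (1 / p)) ^ n)) t * volume (K ∩ unitBallp n p) := by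
        refine lintegral_congr_ae ?_
        filter_upwards [ae_ne_zero_volume] with t ht
        rcases lt_or_gt_of_ne ht with h | h
        · have : {x : Fin n → ℝ | powSum p x ≤ t} = ∅ := by
            ext x
            simpa using h.trans_le (powSum_nonneg x)
          simp [this, h.le]
        · rw [indicator_of_mem (mem_Ioi.2 h), volume_inter_powSum_le hp hcone h, unitBallp_eq hp,
            mul_assoc]
    _ = _ := by
        rw [lintegral_mul_const, lintegral_indicator measurableSet_Ioi]
        exact (by fun_prop : Measurable fun t : ℝ => ENNReal.ofReal (Real.exp (-t)) *
          ENNReal.ofReal ((t ^ (1 / p)) ^ n)).indicator measurableSet_Ioi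

theorem prod_tiltDensity_one_div (hp : 0 < p) (x : Fin n → ℝ) :
    ∏ i, tiltDensity p (1 / p) (x i) =
      (tiltMass p (1 / p) ^ n)⁻¹ * Real.exp (-powSum p x) := by
  have h : p * (1 / p) = 1 := by field_simp
  simp only [tiltDensity, h, sub_self, Real.rpow_zero, one_mul, neg_mul, powSum,
    ← Finset.sum_neg_distrib, Real.exp_sum, Finset.prod_div_distrib, Finset.prod_const,
    Finset.card_univ, Fintype.card_fin]
  rw [div_eq_inv_mul]

theorem pi_tiltMeasure_eq (hp : 0 < p) {a : ℝ} (ha : 0 < a) :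
    Measure.pi (fun _ : Fin n => tiltMeasure p a) =
      volume.withDensity fun x : Fin n → ℝ => ENNReal.ofReal (∏ i, tiltDensity p a (x i)) := by
  have := isProbabilityMeasure_tiltMeasure hp ha
  unfold tiltMeasure at this ⊢
  exact pi_withDensity_ofReal n (tiltDensity_nonneg hp ha) (integrable_tiltDensity hp ha)

theorem pi_tiltMeasure_cone (hp : 0 < p) {K : Set (Fin n → ℝ)}
    (hK : MeasurableSet K) (hcone : ∀ c : ℝ, 0 < c → ∀ x, c • x ∈ K ↔ x ∈ K) :
    Measure.pi (fun _ : Fin n => tiltMeasure p (1 / p)) K =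
      volume (K ∩ unitBallp n p) / volume (unitBallp n p) := by
  have ha : 0 < 1 / p := by positivity
  have := isProbabilityMeasure_tiltMeasure hp ha
  have hZ := tiltMass_pos hp ha
  obtain ⟨d, hd⟩ : ∃ d : ENNReal, ∀ K : Set (Fin n → ℝ), MeasurableSet K →
      (∀ c : ℝ, 0 < c → ∀ x, c • x ∈ K ↔ x ∈ K) →
      Measure.pi (fun _ : Fin n => tiltMeasure p (1 / p)) K =
        d * volume (K ∩ unitBallp n p) := by
    refine ⟨ENNReal.ofReal (tiltMass p (1 / p) ^ n)⁻¹ * ∫⁻ t in Ioi (0 : ℝ),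
      ENNReal.ofReal (Real.exp (-t)) * ENNReal.ofReal ((t ^ (1 / p)) ^ n), fun K hK hcone => ?_⟩
    rw [pi_tiltMeasure_eq hp ha, withDensity_apply _ hK]
    simp_rw [prod_tiltDensity_one_div hp,
      ENNReal.ofReal_mul (inv_nonneg.2 (pow_nonneg hZ.le n))]
    rw [lintegral_const_mul' _ _ ENNReal.ofReal_ne_top, lintegral_exp_neg_powSum hp hcone,
      mul_assoc]
  have h1 := hd univ MeasurableSet.univ (by simp)
  rw [measure_univ, univ_inter] at h1
  rw [hd K hK hcone, ENNReal.eq_inv_of_mul_eq_one_left h1.symm, ENNReal.div_eq_inv_mul]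

theorem IsConeMeasure.apply_cone {C : Measure (Fin n → ℝ)} (hC : IsConeMeasure n p C)
    (hp : 0 < p) (hn : 1 ≤ n) {K : Set (Fin n → ℝ)} (hK : MeasurableSet K)
    (hcone : ∀ c : ℝ, 0 < c → ∀ x, c • x ∈ K ↔ x ∈ K) :
    C K = volume (K ∩ unitBallp n p) / volume (unitBallp n p) := by
  obtain ⟨-, hS, hA⟩ := hC
  have : Nonempty (Fin n) := ⟨⟨0, hn⟩⟩
  have hSm : MeasurableSet (unitSpherep n p) := by
    rw [unitSpherep_eq hp]
    exact measurableSet_eq_fun measurable_powSum measurable_const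
  rw [← measure_inter_conull hS, hA _ (hK.inter hSm) inter_subset_right]
  congr 1
  refine measure_congr ?_
  have h0 : ∀ᵐ x : Fin n → ℝ, x ≠ 0 := by simp [ae_iff]
  filter_upwards [h0] with x hx
  refine propext ?_
  change x ∈ coneOf (K ∩ unitSpherep n p) ↔ x ∈ K ∩ unitBallp n p
  rw [unitSpherep_eq hp, unitBallp_eq hp]
  constructor
  · rintro ⟨r, hr, z, ⟨hzK, hz⟩, rfl⟩
    have hr0 : 0 < r := lt_of_le_of_ne hr.1 (by rintro rfl; simp at hx)
    refine ⟨(hcone r hr0 z).2 hzK, ?_⟩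
    rw [mem_ofPred_eq] at hz ⊢
    rw [powSum_smul hr.1, hz, mul_one]
    exact Real.rpow_le_one hr.1 hr.2 hp.le
  · rintro ⟨hxK, hx1⟩
    have hpos := powSum_pos hx (p := p)
    set r := powSum p x ^ (1 / p) with hr
    have hr0 : 0 < r := Real.rpow_pos_of_pos hpos _
    refine ⟨r, ⟨hr0.le, Real.rpow_le_one hpos.le hx1 (by positivity)⟩, r⁻¹ • x,
      ⟨(hcone _ (inv_pos.2 hr0) x).2 hxK, ?_⟩, (smul_inv_smul₀ hr0.ne' x).symm⟩
    rw [mem_ofPred_eq, powSum_smul (inv_pos.2 hr0).le, Real.inv_rpow hr0.le, hr,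
      ← Real.rpow_mul hpos.le, one_div_mul_cancel hp.ne', Real.rpow_one, inv_mul_cancel₀ hpos.ne']

theorem ratioAGM_smul (hp : 0 < p) (hn : 1 ≤ n) {c : ℝ} (hc : 0 < c) (x : Fin n → ℝ) :
    ratioAGM p (c • x) = ratioAGM p x := by
  have hn0 : (n : ℝ) ≠ 0 := by positivity
  have h1 : (∏ i, |(c • x) i|) = c ^ (n : ℝ) * ∏ i, |x i| := by
    simp [abs_mul, Finset.prod_mul_distrib, abs_of_pos hc]
  have h2 : 1 / (n : ℝ) * ∑ i, |(c • x) i| ^ p = c ^ p * (1 / (n : ℝ) * ∑ i, |x i| ^ p) := by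
    change 1 / (n : ℝ) * powSum p (c • x) = c ^ p * (1 / (n : ℝ) * powSum p x)
    rw [powSum_smul hc.le]
    ring
  have h3 : 0 ≤ 1 / (n : ℝ) * ∑ i, |x i| ^ p := by positivity
  rw [ratioAGM, ratioAGM, h1, h2, Real.mul_rpow (by positivity) (by positivity),
    Real.mul_rpow (by positivity) h3, ← Real.rpow_mul hc.le, ← Real.rpow_mul hc.le,
    mul_one_div_cancel hn0, mul_one_div_cancel hp.ne', Real.rpow_one,
    mul_div_mul_left _ _ hc.ne']

theorem measurable_ratioAGM : Measurable fun x : Fin n → ℝ => ratioAGM p x := by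
  unfold ratioAGM
  fun_prop

theorem HasConeDirDist.measure_ratioAGM_lt {Ω : Type*} [MeasurableSpace Ω] {P : Measure Ω}
    {X : Ω → Fin n → ℝ} (hX : HasConeDirDist n p P X) (hp : 0 < p) (hn : 1 ≤ n) (θ : ℝ) :
    P {ω | ratioAGM p (X ω) < θ} =
      Measure.pi (fun _ : Fin n => tiltMeasure p (1 / p)) {x | ratioAGM p x < θ} := by
  obtain ⟨μR, C, hμ, hμ1, hμ0, hC, hmap⟩ := hX
  have := hC.1
  have hsm : Measurable fun rz : ℝ × (Fin n → ℝ) => rz.1 • rz.2 :=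
    measurable_fst.smul measurable_snd
  have hK : MeasurableSet {x : Fin n → ℝ | ratioAGM p x < θ} :=
    measurableSet_lt measurable_ratioAGM measurable_const
  have hcone : ∀ c : ℝ, 0 < c → ∀ x : Fin n → ℝ,
      c • x ∈ {x | ratioAGM p x < θ} ↔ x ∈ {x | ratioAGM p x < θ} := fun c hc x => by
    rw [mem_ofPred_eq, mem_ofPred_eq, ratioAGM_smul hp hn hc]
  have hXm : AEMeasurable X P := by
    refine AEMeasurable.of_map_ne_zero ?_
    rw [hmap]
    have := Measure.isProbabilityMeasure_map (μ := μR.prod C) hsm.aemeasurable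
    exact IsProbabilityMeasure.ne_zero _
  have hpos : ∀ᵐ rz ∂μR.prod C, 0 < rz.1 := by
    have h1 : ∀ᵐ r ∂μR, 0 < r := by
      filter_upwards [mem_ae_iff.2 hμ1, (ae_iff.2 (by simpa using hμ0) : ∀ᵐ r ∂μR, r ≠ 0)]
        with r hr hr0 using lt_of_le_of_ne hr.1 hr0.symm
    exact Measure.quasiMeasurePreserving_fst.ae h1
  calc P {ω | ratioAGM p (X ω) < θ}
      = Measure.map X P {x | ratioAGM p x < θ} := (Measure.map_apply_of_aemeasurable hXm hK).symm
    _ = μR.prod C (univ ×ˢ {x | ratioAGM p x < θ}) := by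
        rw [hmap, Measure.map_apply hsm hK]
        refine measure_congr ?_
        filter_upwards [hpos] with rz hrz
        refine propext ?_
        change rz.1 • rz.2 ∈ {x | ratioAGM p x < θ} ↔ rz ∈ univ ×ˢ {x | ratioAGM p x < θ}
        rw [hcone _ hrz, mem_prod]
        simp
    _ = C {x | ratioAGM p x < θ} := by rw [Measure.prod_prod, measure_univ, one_mul]
    _ = _ := by rw [hC.apply_cone hp hn hK hcone, pi_tiltMeasure_cone hp hK hcone]

end Cone

/-- The average of `log |x_i|`. -/
def meanLog {n : ℕ} (x : Fin n → ℝ) : ℝ := (∑ i, Real.log |x i|) / n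

/-- The average of `|x_i| ^ p`. -/
def meanPow (p : ℝ) {n : ℕ} (x : Fin n → ℝ) : ℝ := (∑ i, |x i| ^ p) / n

/-- The exponential rate attached to the tilting parameter `a`. -/
def tiltRate (p a : ℝ) : ℝ :=
  Real.log (tiltMass p a) - Real.log (tiltMass p (1 / p)) +
    (1 - p * a) * ((Hfun a - Real.log p) / p - 1 / p)

theorem tiltRate_eq {p a : ℝ} (hp : 0 < p) (ha : 0 < a) :
    tiltRate p a = Hprim a + (1 / p - a) * Hfun a - Real.log (Real.Gamma (1 / p)) -
      (1 / p) * (1 + Real.log p) := by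
  have hlog : ∀ {b : ℝ}, 0 < b → Real.log (tiltMass p b) =
      Real.log (2 / p) + Real.log (Real.Gamma b) - b * (Real.log p + Real.log b) := by
    intro b hb
    have hG := Real.Gamma_pos_of_pos hb
    have hpb : 0 < p * b := mul_pos hp hb
    rw [tiltMass, Real.log_mul (by positivity) (by positivity),
      Real.log_mul (by positivity) hG.ne', Real.log_rpow hpb, Real.log_mul hp.ne' hb.ne']
    ring
  rw [tiltRate, hlog ha, hlog (by positivity : 0 < 1 / p), one_div, Real.log_inv, Hprim]
  field_simp
  ring

theorem neg_ratefn_eq_tiltRate {p θ : ℝ} (hp : 0 < p) (hG : 0 < Gfun p θ)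
    (hH : Hfun (Gfun p θ) = p * Real.log θ) : -ratefn p θ = tiltRate p (Gfun p θ) := by
  rw [tiltRate_eq hp hG, hH, ratefn, Hprim]
  field_simp
  ring

theorem Hfun_one_div {p : ℝ} (hp : 0 < p) : Hfun (1 / p) = p * mConst p := by
  rw [Hfun, mConst, one_div, Real.log_inv]
  field_simp
  ring

theorem exists_tiltRate_ge {p a ε : ℝ} (hp : 0 < p) (ha : a ∈ Ioo 0 (1 / p)) (hε : 0 < ε) :
    ∃ b ∈ Ioo 0 (1 / p), Hfun b < Hfun a ∧ tiltRate p a - ε ≤ tiltRate p b := by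
  have hpε : 0 < p * ε := mul_pos hp hε
  obtain ⟨b, hb, hbH⟩ := exists_Hfun_eq ha.1 (show Hfun a - p * ε < Hfun a by linarith)
  refine ⟨b, ⟨hb.1, hb.2.trans ha.2⟩, by linarith, ?_⟩
  rw [tiltRate_eq hp ha.1, tiltRate_eq hp hb.1, hbH]
  have h1 := Hprim_sub_le hb.1 hb.2
  have h2 : (1 / p - b) * (p * ε) ≤ ε := by
    have : 1 / p * (p * ε) = ε := by field_simp
    nlinarith [mul_pos hb.1 hpε]
  linarith

section Comparison

variable {p a : ℝ} {n : ℕ}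

theorem measurable_meanLog : Measurable fun x : Fin n → ℝ => meanLog x := by
  unfold meanLog
  fun_prop

theorem measurable_meanPow : Measurable fun x : Fin n → ℝ => meanPow p x := by
  unfold meanPow
  fun_prop

theorem meanPow_pos (hn : 1 ≤ n) {x : Fin n → ℝ} (hx : ∀ i, x i ≠ 0) : 0 < meanPow p x := by
  have : Nonempty (Fin n) := ⟨⟨0, hn⟩⟩
  have : 0 < ∑ i, |x i| ^ p :=
    Finset.sum_pos (fun i _ => Real.rpow_pos_of_pos (abs_pos.2 (hx i)) p) Finset.univ_nonempty
  unfold meanPow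
  positivity

theorem ratioAGM_lt_iff (hn : 1 ≤ n) {θ : ℝ} (hθ : 0 < θ) {x : Fin n → ℝ} (hx : ∀ i, x i ≠ 0) :
    ratioAGM p x < θ ↔ meanLog x - 1 / p * Real.log (meanPow p x) < Real.log θ := by
  have hM := meanPow_pos (p := p) hn hx
  have hprod : 0 < ∏ i, |x i| := Finset.prod_pos fun i _ => abs_pos.2 (hx i)
  have hM' : 1 / (n : ℝ) * ∑ i, |x i| ^ p = meanPow p x := by
    rw [meanPow]
    ring
  have hpos : 0 < ratioAGM p x := by
    rw [ratioAGM, hM']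
    positivity
  rw [← Real.log_lt_log_iff hpos hθ, ratioAGM, hM', Real.log_div (by positivity) (by positivity),
    Real.log_rpow hprod, Real.log_rpow hM, Real.log_prod fun i _ => (abs_pos.2 (hx i)).ne',
    meanLog, one_div_mul_eq_div]

theorem tiltDensity_one_div_eq (hp : 0 < p) (ha : 0 < a) {y : ℝ} (hy : y ≠ 0) :
    tiltDensity p (1 / p) y = tiltDensity p a y *
      Real.exp (Real.log (tiltMass p a) - Real.log (tiltMass p (1 / p)) +
        (1 - p * a) * (Real.log |y| - |y| ^ p)) := by
  have hZ := tiltMass_pos hp ha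
  have hZ' := tiltMass_pos hp (by positivity : 0 < 1 / p)
  have hy' := abs_pos.2 hy
  have h : p * (1 / p) = 1 := by field_simp
  have hexp : ∀ b, |y| ^ b = Real.exp (Real.log |y| * b) := Real.rpow_def_of_pos hy'
  rw [tiltDensity, tiltDensity, h, sub_self, Real.rpow_zero, hexp (p * a - 1), ← Real.exp_add,
    Real.exp_add (Real.log (tiltMass p a) - _), Real.exp_sub, Real.exp_log hZ, Real.exp_log hZ']
  field_simp
  rw [← Real.exp_add]
  ring_nf

theorem prod_tiltDensity_one_div_eq (hp : 0 < p) (ha : 0 < a) (hn : 1 ≤ n) {x : Fin n → ℝ}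
    (hx : ∀ i, x i ≠ 0) :
    ∏ i, tiltDensity p (1 / p) (x i) = (∏ i, tiltDensity p a (x i)) *
      Real.exp (n * (Real.log (tiltMass p a) - Real.log (tiltMass p (1 / p)) +
        (1 - p * a) * (meanLog x - meanPow p x))) := by
  have hn0 : (n : ℝ) ≠ 0 := by positivity
  rw [Finset.prod_congr rfl fun i _ => tiltDensity_one_div_eq hp ha (hx i),
    Finset.prod_mul_distrib, ← Real.exp_sum]
  congr 2
  rw [Finset.sum_add_distrib, ← Finset.mul_sum, meanLog, meanPow]
  simp only [Finset.sum_sub_distrib, Finset.sum_const, Finset.card_univ, Fintype.card_fin, nsmul_eq_mul]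
  field_simp

theorem ae_forall_ne_zero : ∀ᵐ x : Fin n → ℝ, ∀ i, x i ≠ 0 := by
  rw [ae_all_iff]
  exact fun i => (Measure.quasiMeasurePreserving_eval (fun _ : Fin n => (volume : Measure ℝ))
    i).ae ae_ne_zero_volume

theorem pi_tiltMeasure_le (hp : 0 < p) (ha : 0 < a) (hn : 1 ≤ n) {A : Set (Fin n → ℝ)}
    (hA : MeasurableSet A) {c : ℝ}
    (h : ∀ x ∈ A, (∀ i, x i ≠ 0) → Real.log (tiltMass p a) - Real.log (tiltMass p (1 / p)) +
      (1 - p * a) * (meanLog x - meanPow p x) ≤ c) :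
    Measure.pi (fun _ : Fin n => tiltMeasure p (1 / p)) A ≤
      ENNReal.ofReal (Real.exp (n * c)) * Measure.pi (fun _ : Fin n => tiltMeasure p a) A := by
  rw [pi_tiltMeasure_eq hp ha, pi_tiltMeasure_eq hp (by positivity), withDensity_apply _ hA,
    withDensity_apply _ hA, ← lintegral_const_mul' _ _ ENNReal.ofReal_ne_top]
  refine lintegral_mono_ae ?_
  filter_upwards [ae_restrict_of_ae ae_forall_ne_zero, ae_restrict_mem hA] with x hx hxA
  rw [← ENNReal.ofReal_mul (Real.exp_pos _).le, prod_tiltDensity_one_div_eq hp ha hn hx, mul_comm]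
  have := Finset.prod_nonneg fun i (_ : i ∈ Finset.univ) => tiltDensity_nonneg hp ha (x i)
  have := h x hxA hx
  gcongr

theorem le_pi_tiltMeasure (hp : 0 < p) (ha : 0 < a) (hn : 1 ≤ n) {A : Set (Fin n → ℝ)}
    (hA : MeasurableSet A) {c : ℝ}
    (h : ∀ x ∈ A, (∀ i, x i ≠ 0) → c ≤ Real.log (tiltMass p a) -
      Real.log (tiltMass p (1 / p)) + (1 - p * a) * (meanLog x - meanPow p x)) :
    ENNReal.ofReal (Real.exp (n * c)) * Measure.pi (fun _ : Fin n => tiltMeasure p a) A ≤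
      Measure.pi (fun _ : Fin n => tiltMeasure p (1 / p)) A := by
  rw [pi_tiltMeasure_eq hp ha, pi_tiltMeasure_eq hp (by positivity), withDensity_apply _ hA,
    withDensity_apply _ hA, ← lintegral_const_mul' _ _ ENNReal.ofReal_ne_top]
  refine lintegral_mono_ae ?_
  filter_upwards [ae_restrict_of_ae ae_forall_ne_zero, ae_restrict_mem hA] with x hx hxA
  rw [← ENNReal.ofReal_mul (Real.exp_pos _).le, prod_tiltDensity_one_div_eq hp ha hn hx, mul_comm]
  have := Finset.prod_nonneg fun i (_ : i ∈ Finset.univ) => tiltDensity_nonneg hp ha (x i)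
  have := h x hxA hx
  gcongr

theorem measure_ratioAGM_lt_le (hp : 0 < p) (ha : a ∈ Ioo 0 (1 / p)) (hn : 1 ≤ n) {θ : ℝ}
    (hθ : 0 < θ) (hH : Hfun a = p * Real.log θ) :
    Measure.pi (fun _ : Fin n => tiltMeasure p (1 / p)) {x | ratioAGM p x < θ} ≤
      ENNReal.ofReal (Real.exp (n * tiltRate p a)) := by
  have := isProbabilityMeasure_tiltMeasure hp ha.1
  have hpa : 0 ≤ 1 - p * a := by
    have := (lt_div_iff₀ hp).1 ha.2
    linarith
  refine (pi_tiltMeasure_le (c := tiltRate p a) hp ha.1 hn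
    (measurableSet_lt measurable_ratioAGM measurable_const) fun x hxA hx => ?_).trans
    (mul_le_of_le_one_right' prob_le_one)
  rw [mem_ofPred_eq, ratioAGM_lt_iff hn hθ hx] at hxA
  have hM := meanPow_pos (p := p) hn hx
  have h1 : Real.log (p * meanPow p x) ≤ p * meanPow p x - 1 :=
    Real.log_le_sub_one_of_pos (by positivity)
  rw [Real.log_mul hp.ne' hM.ne'] at h1
  have h2 : 1 / p * (Real.log p + Real.log (meanPow p x)) ≤ 1 / p * (p * meanPow p x - 1) := by
    gcongr
  have h3 : 1 / p * (p * meanPow p x - 1) = meanPow p x - 1 / p := by field_simp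
  have h4 : (Hfun a - Real.log p) / p = Real.log θ - 1 / p * Real.log p := by
    rw [hH]
    field_simp
  rw [tiltRate, h4]
  refine add_le_add_right (mul_le_mul_of_nonneg_left ?_ hpa) _
  linarith

theorem eventually_le_measure_ratioAGM_lt (hp : 0 < p) (ha : a ∈ Ioo 0 (1 / p)) {θ ε : ℝ}
    (hθ : 0 < θ) (hH : Hfun a < p * Real.log θ) (hε : 0 < ε) :
    ∀ᶠ n : ℕ in atTop, ENNReal.ofReal (Real.exp (n * (tiltRate p a - ε)) * 2⁻¹) ≤
      Measure.pi (fun _ : Fin n => tiltMeasure p (1 / p)) {x | ratioAGM p x < θ} := by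
  have := isProbabilityMeasure_tiltMeasure hp ha.1
  have hip : 0 < 1 / p := by positivity
  have hpa : 0 ≤ 1 - p * a := by
    have := (lt_div_iff₀ hp).1 ha.2
    linarith
  have hpa1 : 1 - p * a ≤ 1 := by linarith [mul_pos hp ha.1]
  set ℓ := (Hfun a - Real.log p) / p with hℓ
  obtain ⟨δ, hδ0, hδp, hδε, hδθ⟩ : ∃ δ : ℝ, 0 < δ ∧ δ < 1 / p ∧ δ < ε / 2 ∧
      ℓ + δ - 1 / p * Real.log (1 / p - δ) < Real.log θ := by
    have hcont : ContinuousAt (fun δ : ℝ => ℓ + δ - 1 / p * Real.log (1 / p - δ)) 0 := by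
      refine ContinuousAt.sub (by fun_prop) (ContinuousAt.mul (by fun_prop) ?_)
      exact ContinuousAt.log (by fun_prop) (by simpa using hp.ne')
    have hlt : ℓ + 0 - 1 / p * Real.log (1 / p - 0) < Real.log θ := by
      have : ℓ + 0 - 1 / p * Real.log (1 / p - 0) = Hfun a / p := by
        rw [sub_zero, one_div, Real.log_inv, hℓ]
        field_simp
        ring
      rw [this, div_lt_iff₀ hp]
      linarith
    have hev : ∀ᶠ δ in nhdsWithin (0 : ℝ) (Ioi 0), 0 < δ ∧ δ < 1 / p ∧ δ < ε / 2 ∧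
        ℓ + δ - 1 / p * Real.log (1 / p - δ) < Real.log θ := by
      filter_upwards [self_mem_nhdsWithin, nhdsWithin_le_nhds (gt_mem_nhds hip),
        nhdsWithin_le_nhds (gt_mem_nhds (half_pos hε)),
        nhdsWithin_le_nhds (hcont.eventually (gt_mem_nhds hlt))] with δ h1 h2 h3 h4
        using ⟨h1, h2, h3, h4⟩
    exact hev.exists
  have hdev := (tendsto_pi_measure_deviation (Q := tiltMeasure p a) (f := fun y => Real.log |y|)
    (by fun_prop) (integrable_log_abs_tiltMeasure hp ha.1) hδ0).add
    (tendsto_pi_measure_deviation (Q := tiltMeasure p a) (f := fun y => |y| ^ p)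
    (by fun_prop) (integrable_abs_rpow_tiltMeasure hp ha.1 (by linarith [mul_pos hp ha.1])) hδ0)
  rw [add_zero, integral_log_abs_tiltMeasure hp ha.1, integral_abs_rpow_self_tiltMeasure hp ha.1]
    at hdev
  have hhalf : (0 : ENNReal) < 2⁻¹ := by simp
  filter_upwards [hdev.eventually (gt_mem_nhds hhalf), eventually_ge_atTop 1] with n hn hn1
  set E : Set (Fin n → ℝ) := {x | |meanLog x - ℓ| < δ ∧ |meanPow p x - 1 / p| < δ} with hE
  have hEm : MeasurableSet E :=
    (measurableSet_lt (measurable_meanLog.sub_const ℓ).abs measurable_const).inter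
      (measurableSet_lt (measurable_meanPow.sub_const (1 / p)).abs measurable_const)
  have hEc : Measure.pi (fun _ : Fin n => tiltMeasure p a) Eᶜ ≤ 2⁻¹ := by
    refine le_trans (measure_mono ?_) ((measure_union_le _ _).trans hn.le)
    intro x hx
    by_contra hcon
    simp only [mem_union, mem_ofPred_eq, not_or, not_le] at hcon
    exact hx hcon
  have hEhalf : (2⁻¹ : ENNReal) ≤ Measure.pi (fun _ : Fin n => tiltMeasure p a) E := by
    have h1 : (1 : ENNReal) ≤ Measure.pi (fun _ : Fin n => tiltMeasure p a) E + 2⁻¹ := by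
      rw [← measure_univ (μ := Measure.pi (fun _ : Fin n => tiltMeasure p a)),
        ← measure_add_measure_compl hEm]
      gcongr
    rw [← ENNReal.inv_two_add_inv_two] at h1
    exact (ENNReal.add_le_add_iff_right (by simp)).1 h1
  have hsub : E ≤ᵐ[Measure.pi fun _ : Fin n => tiltMeasure p (1 / p)]
      {x | ratioAGM p x < θ} := by
    rw [pi_tiltMeasure_eq hp hip]
    filter_upwards [(withDensity_absolutelyContinuous _ _).ae_le ae_forall_ne_zero] with x hx
    rintro ⟨h1, h2⟩
    change ratioAGM p x < θ
    rw [ratioAGM_lt_iff hn1 hθ hx]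
    rw [abs_lt] at h1 h2
    have hlog : Real.log (1 / p - δ) ≤ Real.log (meanPow p x) :=
      Real.log_le_log (by linarith) (by linarith)
    have : 1 / p * Real.log (1 / p - δ) ≤ 1 / p * Real.log (meanPow p x) := by gcongr
    linarith
  calc ENNReal.ofReal (Real.exp (n * (tiltRate p a - ε)) * 2⁻¹)
      = ENNReal.ofReal (Real.exp (n * (tiltRate p a - ε))) * 2⁻¹ := by
        rw [ENNReal.ofReal_mul (Real.exp_pos _).le, ENNReal.ofReal_inv_of_pos (by norm_num)]
        simp
    _ ≤ ENNReal.ofReal (Real.exp (n * (tiltRate p a - ε))) *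
          Measure.pi (fun _ : Fin n => tiltMeasure p a) E := by gcongr
    _ ≤ Measure.pi (fun _ : Fin n => tiltMeasure p (1 / p)) E := by
        refine le_pi_tiltMeasure hp ha.1 hn1 hEm fun x hx _ => ?_
        obtain ⟨h1, h2⟩ := hx
        rw [abs_lt] at h1 h2
        have h3 : (1 - p * a) * (ℓ - 1 / p - 2 * δ) ≤
            (1 - p * a) * (meanLog x - meanPow p x) :=
          mul_le_mul_of_nonneg_left (by linarith) hpa
        have h4 : (1 - p * a) * (2 * δ) ≤ ε := by nlinarith
        rw [tiltRate, ← hℓ]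
        linarith
    _ ≤ _ := measure_mono_ae hsub

end Comparison

/-- for `θ ∈ (0, e^{m_p})`, `lim_n (1/n) log P(R_n < θ) = -I_p(θ)`. -/
theorem statement6 (p : ℝ) (hp : 1 ≤ p)
    (Ω : ℕ → Type) [∀ n, MeasurableSpace (Ω n)]
    (P : ∀ n, Measure (Ω n)) [∀ n, IsProbabilityMeasure (P n)]
    (X : ∀ n, Ω n → Fin n → ℝ)
    (hX : ∀ n, 1 ≤ n → HasConeDirDist n p (P n) (X n))
    (θ : ℝ) (hθ : θ ∈ Ioo 0 (Real.exp (mConst p))) :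
    Tendsto
      (fun n : ℕ => (n : ℝ)⁻¹ *
        Real.log (((P n) {ω | ratioAGM p (X n ω) < θ}).toReal))
      atTop (nhds (-(ratefn p θ))) := by
  have hp0 : 0 < p := zero_lt_one.trans_le hp
  have hlt : p * Real.log θ < Hfun (1 / p) := by
    rw [Hfun_one_div hp0]
    have := (Real.log_lt_iff_lt_exp hθ.1).2 hθ.2
    gcongr
  obtain ⟨hG, hH⟩ := Hinv_mem_and_eq (by positivity : 0 < 1 / p) hlt
  change Gfun p θ ∈ Ioo 0 (1 / p) at hG
  change Hfun (Gfun p θ) = p * Real.log θ at hH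
  rw [neg_ratefn_eq_tiltRate hp0 hG.1 hH]
  set a := Gfun p θ
  have hupper : ∀ n : ℕ, 1 ≤ n →
      ((P n) {ω | ratioAGM p (X n ω) < θ}).toReal ≤ Real.exp (n * tiltRate p a) := by
    intro n hn
    rw [(hX n hn).measure_ratioAGM_lt hp0 hn θ]
    exact ENNReal.toReal_le_of_le_ofReal (Real.exp_pos _).le
      (measure_ratioAGM_lt_le hp0 hG hn hθ.1 hH)
  have hlower : ∀ ε > 0, ∀ᶠ n : ℕ in atTop, Real.exp (n * (tiltRate p a - ε)) * 2⁻¹ ≤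
      ((P n) {ω | ratioAGM p (X n ω) < θ}).toReal := by
    intro ε hε
    obtain ⟨b, hb, hbH, hbr⟩ := exists_tiltRate_ge hp0 hG (half_pos hε)
    filter_upwards [eventually_le_measure_ratioAGM_lt hp0 hb hθ.1 (hH ▸ hbH) (half_pos hε),
      eventually_ge_atTop 1] with n hn hn1
    rw [← (hX n hn1).measure_ratioAGM_lt hp0 hn1 θ,
      ENNReal.ofReal_le_iff_le_toReal (measure_ne_top _ _)] at hn
    have hle : tiltRate p a - ε ≤ tiltRate p b - ε / 2 := by linarith
    refine le_trans ?_ hn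
    gcongr
  rw [tendsto_order]
  constructor
  · intro c hc
    set ε := (tiltRate p a - c) / 2 with hε
    have hε0 : 0 < ε := by
      rw [hε]
      linarith
    have hsmall : Tendsto (fun n : ℕ => (n : ℝ)⁻¹ * Real.log 2) atTop (nhds 0) := by
      simpa using tendsto_inv_atTop_nhds_zero_nat.mul_const (Real.log 2)
    filter_upwards [hlower ε hε0, eventually_ge_atTop 1, hsmall.eventually (gt_mem_nhds hε0)]
      with n hn hn1 hns
    have hn0 : (0 : ℝ) < n := by positivity
    have hlog := Real.log_le_log (by positivity) hn
    rw [Real.log_mul (Real.exp_pos _).ne' (by norm_num), Real.log_exp, Real.log_inv] at hlog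
    have h2 := mul_le_mul_of_nonneg_left hlog (inv_pos.2 hn0).le
    rw [mul_add, inv_mul_cancel_left₀ hn0.ne'] at h2
    linarith
  · intro c hc
    filter_upwards [hlower 1 one_pos, eventually_ge_atTop 1] with n hn hn1
    have hn0 : (0 : ℝ) < n := by positivity
    have hpos := lt_of_lt_of_le (by positivity) hn
    have hlog := Real.log_le_log hpos (hupper n hn1)
    rw [Real.log_exp] at hlog
    have h2 := mul_le_mul_of_nonneg_left hlog (inv_pos.2 hn0).le
    rw [inv_mul_cancel_left₀ hn0.ne'] at h2
    linarith
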